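/- Let δ > 0, λ ≥ 0, and let μ_MP be the Marchenko–Pastur distribution with parameter δ. Define K₀(t) = ∫ e^{−(x+λ)t} dμ_MP(x) and K₁(t) = ∫ x e^{−(x+λ)t} dμ_MP(x) for t ≥ 0. Then the pair (R_θ, R_ℓ) := (K₀, −(1/δ) K₁) solves the coupled Volterra integral equations of the DMFT response functions for ridge regression: for all t ≥ 0, R_θ(t) = 1 − ∫₀ᵗ ( (1 + λ) R_θ(s) + ∫₀ˢ R_ℓ(s − u) R_θ(u) du ) ds, and R_ℓ(t) = −(1/δ) R_θ(t) − (1/δ) ∫₀ᵗ R_θ(t − s) R_ℓ(s) ds. -/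

import Mathlib

open MeasureTheory

/-- Lower edge `λ₋ = (1 − 1/√δ)²` of the Marchenko–Pastur bulk. -/
noncomputable def lamMinus (δ : ℝ) : ℝ := (1 - 1 / Real.sqrt δ) ^ 2

/-- Upper edge `λ₊ = (1 + 1/√δ)²` of the Marchenko–Pastur bulk. -/
noncomputable def lamPlus (δ : ℝ) : ℝ := (1 + 1 / Real.sqrt δ) ^ 2

/-- Density `δ √((λ₊ − x)(x − λ₋)) / (2π x)` of the bulk of the Marchenko–Pastur law. -/
noncomputable def mpDensity (δ : ℝ) (x : ℝ) : ℝ :=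
  δ * Real.sqrt ((lamPlus δ - x) * (x - lamMinus δ)) / (2 * Real.pi * x)

/-- The Marchenko–Pastur distribution with parameter `δ`: the absolutely continuous part
with density `mpDensity δ` supported on `[λ₋, λ₊]`, plus an atom of mass `1 − δ` at `0`
(present exactly when `δ < 1`, since `ENNReal.ofReal (1 − δ) = 0` for `δ ≥ 1`). -/
noncomputable def mpMeasure (δ : ℝ) : Measure ℝ :=
  volume.withDensity
      (fun x => ENNReal.ofReal ((Set.Icc (lamMinus δ) (lamPlus δ)).indicator (mpDensity δ) x))
    + ENNReal.ofReal (1 - δ) • Measure.dirac 0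

/-- `K₀(t) = ∫ e^{−(x+λ)t} dμ_MP(x)`. -/
noncomputable def K0 (δ lam t : ℝ) : ℝ := ∫ x, Real.exp (-(x + lam) * t) ∂(mpMeasure δ)

/-- `K₁(t) = ∫ x e^{−(x+λ)t} dμ_MP(x)`. -/
noncomputable def K1 (δ lam t : ℝ) : ℝ := ∫ x, x * Real.exp (-(x + lam) * t) ∂(mpMeasure δ)

/-!
Write `r = 1 / √δ`. The measure `x μ_MP(dx)` is a semicircle law, whose orthogonal polynomials are
shifted Chebyshev polynomials. Its Jacobi matrix (diagonal `1 + r²`, off-diagonal `r`) is that of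
`μ_MP` itself (diagonal `1, 1 + r², 1 + r², …`, off-diagonal `r`) with site `0` removed. Integrated
against `e^{-(x + λ)t}`, each family of orthogonal polynomials evolves by its own Jacobi matrix, so
`K₀` is the return amplitude to site `0` of the full half-line and `K₁` that of the half-line
without site `0`. Since `x = 1 + r p₁(x)` for the first orthogonal polynomial `p₁` of `μ_MP`,
the difference `K₁ - K₀` is `r` times the amplitude from site `0` to site `1`; decomposing paths at
their last jump `0 → 1` gives `K₁ = K₀ - (1/δ) K₀ * K₁`, where `*` is the causal convolution. This
is the second equation, and substituting it into `K₀' = -λ K₀ - K₁` gives the first.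

Analytically, for the two flows `a` and `b`, the quantity `a_{k+1} * b_{k+1} - a_{k+2} * b_k` does
not depend on `k` and tends to `0` as `k → ∞`, hence vanishes.
-/

open Filter Topology Polynomial.Chebyshev

/-! ### Causal convolution and Jacobi flows -/

/-- The causal (Volterra) convolution of two functions of time. For `t < 0` the interval integral
runs backwards, so that the usual identities hold for every real `t`. -/
noncomputable def causalConv (f g : ℝ → ℝ) (t : ℝ) : ℝ := ∫ u in (0 : ℝ)..t, f (t - u) * g u

section CausalConv

variable {f f₁ f₂ g g₁ g₂ : ℝ → ℝ}

theorem causalConv_comm (f g : ℝ → ℝ) (t : ℝ) : causalConv f g t = causalConv g f t := by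
  simpa [causalConv, mul_comm] using
    intervalIntegral.integral_comp_sub_left (a := 0) (b := t) (fun u => f u * g (t - u)) t

theorem causalConv_smul_left (r : ℝ) (f g : ℝ → ℝ) (t : ℝ) :
    causalConv (r • f) g t = r * causalConv f g t := by
  simp [causalConv, mul_assoc]

theorem causalConv_smul_right (r : ℝ) (f g : ℝ → ℝ) (t : ℝ) :
    causalConv f (r • g) t = r * causalConv f g t := by
  rw [causalConv_comm, causalConv_smul_left, causalConv_comm]

theorem intervalIntegrable_causalConv (hf : Continuous f) (hg : Continuous g) (t a b : ℝ) :
    IntervalIntegrable (fun u => f (t - u) * g u) volume a b :=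
  Continuous.intervalIntegrable (by fun_prop) a b

theorem causalConv_add_left (hf₁ : Continuous f₁) (hf₂ : Continuous f₂) (hg : Continuous g)
    (t : ℝ) : causalConv (f₁ + f₂) g t = causalConv f₁ g t + causalConv f₂ g t := by
  simp only [causalConv, Pi.add_apply, add_mul]
  exact intervalIntegral.integral_add (intervalIntegrable_causalConv hf₁ hg t 0 t)
    (intervalIntegrable_causalConv hf₂ hg t 0 t)

theorem causalConv_add_right (hf : Continuous f) (hg₁ : Continuous g₁) (hg₂ : Continuous g₂)
    (t : ℝ) : causalConv f (g₁ + g₂) t = causalConv f g₁ t + causalConv f g₂ t := by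
  simp only [causalConv_comm f, causalConv_add_left hg₁ hg₂ hf]

theorem abs_causalConv_le {A B t : ℝ} (hf : ∀ u, |u| ≤ |t| → |f u| ≤ A)
    (hg : ∀ u, |u| ≤ |t| → |g u| ≤ B) : |causalConv f g t| ≤ A * B * |t| := by
  have hA : 0 ≤ A := (abs_nonneg _).trans (hf t le_rfl)
  have h := intervalIntegral.norm_integral_le_of_norm_le_const (a := 0) (b := t)
    (f := fun u => f (t - u) * g u) (C := A * B) fun u hu => by
      have hu' := Set.uIoc_subset_uIcc hu
      have hleft : |u| ≤ |t| := by simpa using Set.abs_sub_left_of_mem_uIcc hu'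
      have hright : |t - u| ≤ |t| := by simpa using Set.abs_sub_right_of_mem_uIcc hu'
      rw [norm_mul]
      exact mul_le_mul (hf _ hright) (hg _ hleft) (norm_nonneg _) hA
  simpa only [causalConv, sub_zero, Real.norm_eq_abs] using h

theorem causalConv_sub_causalConv_of_hasDerivAt {c : ℝ} {p q : ℝ → ℝ}
    (hf : ∀ t, HasDerivAt f (c * f t + p t) t) (hg : ∀ t, HasDerivAt g (c * g t + q t) t)
    (hp : Continuous p) (hq : Continuous q) (t : ℝ) :
    causalConv f q t - causalConv p g t = f 0 * g t - f t * g 0 := by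
  have hf_cont : Continuous f := continuous_iff_continuousAt.2 fun t => (hf t).continuousAt
  have hg_cont : Continuous g := continuous_iff_continuousAt.2 fun t => (hg t).continuousAt
  have hfq := intervalIntegrable_causalConv hf_cont hq t 0 t
  have hpg := intervalIntegrable_causalConv hp hg_cont t 0 t
  have hderiv (u : ℝ) : HasDerivAt (fun u => f (t - u) * g u)
      (f (t - u) * q u - p (t - u) * g u) u :=
    (((hf (t - u)).comp_const_sub t u).mul (hg u)).congr_deriv (by ring)
  simpa [causalConv, intervalIntegral.integral_sub hfq hpg] using
    intervalIntegral.integral_eq_sub_of_hasDerivAt (fun u _ => hderiv u) (hfq.sub hpg)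

end CausalConv

/-- A solution `(aₖ)` of the evolution `a' = J a` on the sites `k ≥ 1` of the half-line, where `J`
is the Jacobi matrix with constant diagonal `c` and off-diagonal `r`, started from rest there.
The site `0` is left free: it drives the others. The growth condition excludes solutions entering
from infinity. -/
structure IsJacobiFlow (c r : ℝ) (a : ℕ → ℝ → ℝ) : Prop where
  continuous_zero : Continuous (a 0)
  hasDerivAt_succ : ∀ k t, HasDerivAt (a (k + 1)) (c * a (k + 1) t + r * (a k t + a (k + 2) t)) t
  succ_apply_zero : ∀ k, a (k + 1) 0 = 0
  exists_abs_le_geometric : ∀ T, ∃ M ρ, 1 ≤ ρ ∧ ∀ k t, |t| ≤ T → |a k t| ≤ M * ρ ^ k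

namespace IsJacobiFlow

variable {c r : ℝ} {a b : ℕ → ℝ → ℝ}

theorem continuous (ha : IsJacobiFlow c r a) : ∀ k, Continuous (a k)
  | 0 => ha.continuous_zero
  | k + 1 => continuous_iff_continuousAt.2 fun t => (ha.hasDerivAt_succ k t).continuousAt

theorem abs_succ_le_of_abs_le (ha : IsJacobiFlow c r a) {k j : ℕ} {A t : ℝ}
    (h : ∀ i ≤ 2, ∀ s, |s| ≤ |t| → |a (k + i) s| ≤ A * |s| ^ j) :
    |a (k + 1) t| ≤ (|c| + 2 * |r|) * A * (|t| ^ (j + 1) / (j + 1)) := by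
  have hcont := ha.continuous
  have hftc := intervalIntegral.integral_eq_sub_of_hasDerivAt (a := 0) (b := t)
    (fun s _ => ha.hasDerivAt_succ k s) (Continuous.intervalIntegrable (by fun_prop) 0 t)
  rw [ha.succ_apply_zero, sub_zero] at hftc
  have hderiv (s : ℝ) (hs : |s| ≤ |t|) :
      |c * a (k + 1) s + r * (a k s + a (k + 2) s)| ≤ (|c| + 2 * |r|) * A * |s| ^ j :=
    calc |c * a (k + 1) s + r * (a k s + a (k + 2) s)|
        ≤ |c| * |a (k + 1) s| + |r| * (|a k s| + |a (k + 2) s|) := by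
          refine (abs_add_le _ _).trans ?_
          rw [abs_mul, abs_mul]
          gcongr
          exact abs_add_le _ _
      _ ≤ |c| * (A * |s| ^ j) + |r| * (A * |s| ^ j + A * |s| ^ j) := by
          gcongr
          exacts [h 1 one_le_two s hs, h 0 zero_le_two s hs, h 2 le_rfl s hs]
      _ = (|c| + 2 * |r|) * A * |s| ^ j := by ring
  calc |a (k + 1) t|
      = ‖∫ s in (0 : ℝ)..t, (c * a (k + 1) s + r * (a k s + a (k + 2) s))‖ := by
        rw [hftc, Real.norm_eq_abs]
    _ ≤ ∫ s in Set.uIoc 0 t, ‖c * a (k + 1) s + r * (a k s + a (k + 2) s)‖ :=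
        intervalIntegral.norm_integral_le_integral_norm_uIoc
    _ ≤ ∫ s in Set.uIoc 0 t, (|c| + 2 * |r|) * A * |s - 0| ^ j := by
        refine setIntegral_mono_on (Continuous.integrableOn_uIoc (by fun_prop))
          (Continuous.integrableOn_uIoc (by fun_prop)) measurableSet_uIoc fun s hs => ?_
        rw [sub_zero]
        exact hderiv s (by simpa using Set.abs_sub_left_of_mem_uIcc (Set.uIoc_subset_uIcc hs))
    _ = (|c| + 2 * |r|) * A * (|t| ^ (j + 1) / (j + 1)) := by
        rw [integral_const_mul, integral_pow_abs_sub_uIoc, sub_zero]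

-- Site `k + j` feels the drive only after `j` hops, each of which costs one time integration.
theorem abs_apply_add_le (ha : IsJacobiFlow c r a) {M ρ T : ℝ} (hρ : 1 ≤ ρ)
    (hM : ∀ k t, |t| ≤ T → |a k t| ≤ M * ρ ^ k) (j : ℕ) : ∀ (k : ℕ) (t : ℝ), |t| ≤ T →
    |a (k + j) t| ≤ M * ρ ^ (k + j) * ((|c| + 2 * |r|) * ρ) ^ j / j.factorial * |t| ^ j := by
  induction j with
  | zero => simpa using hM
  | succ j ih =>
    intro k t ht
    have hM0 : 0 ≤ M := by simpa using (abs_nonneg _).trans (hM 0 t ht)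
    have hsite (i : ℕ) (hi : i ≤ 2) (s : ℝ) (hs : |s| ≤ |t|) : |a (k + j + i) s|
        ≤ M * ρ ^ (k + j + 2) * ((|c| + 2 * |r|) * ρ) ^ j / j.factorial * |s| ^ j :=
      calc |a (k + j + i) s| = |a (k + i + j) s| := by rw [add_right_comm]
        _ ≤ M * ρ ^ (k + i + j) * ((|c| + 2 * |r|) * ρ) ^ j / j.factorial * |s| ^ j :=
          ih (k + i) s (hs.trans ht)
        _ ≤ _ := by
          have hpow : ρ ^ (k + i + j) ≤ ρ ^ (k + j + 2) := pow_le_pow_right₀ hρ (by lia)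
          gcongr
    refine (ha.abs_succ_le_of_abs_le hsite).trans_eq ?_
    rw [Nat.factorial_succ]
    push_cast
    field_simp
    ring

theorem exists_tendsto_zero_bound (ha : IsJacobiFlow c r a) (T : ℝ) :
    ∃ B : ℕ → ℝ, Tendsto B atTop (𝓝 0) ∧ ∀ k t, |t| ≤ T → |a k t| ≤ B k := by
  obtain ⟨M, ρ, hρ, hM⟩ := ha.exists_abs_le_geometric T
  refine ⟨fun k => M * ((ρ * ((|c| + 2 * |r|) * ρ) * T) ^ k / k.factorial), ?_, fun k t ht => ?_⟩
  · simpa using (FloorSemiring.tendsto_pow_div_factorial_atTop _).const_mul M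
  · have hM0 : 0 ≤ M := by simpa using (abs_nonneg _).trans (hM 0 t ht)
    calc |a k t| ≤ M * ρ ^ k * ((|c| + 2 * |r|) * ρ) ^ k / k.factorial * |t| ^ k := by
          simpa using ha.abs_apply_add_le hρ hM k 0 t ht
      _ ≤ M * ρ ^ k * ((|c| + 2 * |r|) * ρ) ^ k / k.factorial * T ^ k := by gcongr
      _ = _ := by simp only [mul_pow]; ring

theorem tendsto_causalConv (ha : IsJacobiFlow c r a) (hb : IsJacobiFlow c r b) (i j : ℕ) (t : ℝ) :
    Tendsto (fun k => causalConv (a (k + i)) (b (k + j)) t) atTop (𝓝 0) := by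
  obtain ⟨A, hA, ha'⟩ := ha.exists_tendsto_zero_bound |t|
  obtain ⟨B, hB, hb'⟩ := hb.exists_tendsto_zero_bound |t|
  have hAB := ((hA.comp (tendsto_add_atTop_nat i)).mul
    (hB.comp (tendsto_add_atTop_nat j))).mul_const |t|
  rw [zero_mul, zero_mul] at hAB
  exact squeeze_zero_norm (fun k => abs_causalConv_le (ha' _) (hb' _)) hAB

theorem hasDerivAt_succ' (ha : IsJacobiFlow c r a) (k : ℕ) (t : ℝ) :
    HasDerivAt (a (k + 1)) (c * a (k + 1) t + (r • (a k + a (k + 2))) t) t :=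
  ha.hasDerivAt_succ k t

theorem continuous_hop (ha : IsJacobiFlow c r a) (k : ℕ) :
    Continuous (r • (a k + a (k + 2))) :=
  ((ha.continuous k).add (ha.continuous (k + 2))).const_smul r

theorem causalConv_sub_succ (ha : IsJacobiFlow c r a) (hb : IsJacobiFlow c r b) (k : ℕ) (t : ℝ) :
    r * (causalConv (a (k + 1)) (b (k + 1)) t - causalConv (a (k + 2)) (b k) t)
      = r * (causalConv (a (k + 2)) (b (k + 2)) t - causalConv (a (k + 3)) (b (k + 1)) t) := by
  have h := causalConv_sub_causalConv_of_hasDerivAt (ha.hasDerivAt_succ' (k + 1))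
    (hb.hasDerivAt_succ' k) (ha.continuous_hop _) (hb.continuous_hop _) t
  rw [causalConv_smul_left, causalConv_smul_right,
    causalConv_add_left (ha.continuous _) (ha.continuous _) (hb.continuous _),
    causalConv_add_right (ha.continuous _) (hb.continuous _) (hb.continuous _),
    ha.succ_apply_zero, hb.succ_apply_zero] at h
  linear_combination -h

theorem mul_causalConv_sub_eq_zero (ha : IsJacobiFlow c r a) (hb : IsJacobiFlow c r b) (t : ℝ) :
    r * (causalConv (a 1) (b 1) t - causalConv (a 2) (b 0) t) = 0 := by
  have hconst (k : ℕ) :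
      r * (causalConv (a (k + 1)) (b (k + 1)) t - causalConv (a (k + 2)) (b k) t)
        = r * (causalConv (a 1) (b 1) t - causalConv (a 2) (b 0) t) := by
    induction k with
    | zero => rfl
    | succ k ih => exact (ha.causalConv_sub_succ hb k t).symm.trans ih
  have hlim := ((ha.tendsto_causalConv hb 1 1 t).sub (ha.tendsto_causalConv hb 2 0 t)).const_mul r
  simpa using tendsto_nhds_unique (tendsto_const_nhds.congr fun k => (hconst k).symm) hlim

-- First-passage decomposition: `a 1` is fed by `a 0` through the bond `0 — 1`, and the response of
-- the sites `k ≥ 1`, seen at their first site, is `b 0`.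
theorem mul_causalConv_zero_zero (ha : IsJacobiFlow c r a) (hb : IsJacobiFlow c r b)
    (hb₀ : ∀ t, HasDerivAt (b 0) (c * b 0 t + r * b 1 t) t) (t : ℝ) :
    r * causalConv (a 0) (b 0) t = b 0 0 * a 1 t := by
  have h := causalConv_sub_causalConv_of_hasDerivAt (q := r • b 1) (ha.hasDerivAt_succ' 0) hb₀
    (ha.continuous_hop _) ((hb.continuous 1).const_smul r) t
  rw [causalConv_smul_left, causalConv_smul_right, ha.succ_apply_zero,
    causalConv_add_left (ha.continuous _) (ha.continuous _) (hb.continuous _)] at h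
  linear_combination ha.mul_causalConv_sub_eq_zero hb t - h

end IsJacobiFlow

theorem abs_le_geometric_of_recurrence {c r z : ℝ} (hr : r ≠ 0) {u : ℕ → ℝ}
    (hu : ∀ k, z * u (k + 1) = c * u (k + 1) + r * (u k + u (k + 2))) (k : ℕ) :
    |u k| ≤ (|u 0| + |u 1|) * (1 + |z - c| / |r|) ^ k := by
  set q := |z - c| / |r| with hq
  have hq0 : 0 ≤ q := by positivity
  induction k using Nat.twoStepInduction with
  | zero => simp
  | one =>
    rw [pow_one]
    nlinarith [abs_nonneg (u 0), abs_nonneg (u 1)]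
  | more k ih₀ ih₁ =>
    have hstep : u (k + 2) = (z - c) / r * u (k + 1) - u k := by
      field_simp
      linear_combination -hu k
    calc |u (k + 2)| ≤ q * |u (k + 1)| + |u k| := by
          rw [hstep, hq, ← abs_div, ← abs_mul]
          exact abs_sub _ _
      _ ≤ q * ((|u 0| + |u 1|) * (1 + q) ^ (k + 1)) + (|u 0| + |u 1|) * (1 + q) ^ k := by gcongr
      _ = (|u 0| + |u 1|) * (1 + q) ^ k * (q * (1 + q) + 1) := by ring
      _ ≤ (|u 0| + |u 1|) * (1 + q) ^ k * (1 + q) ^ 2 := by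
          gcongr
          nlinarith
      _ = (|u 0| + |u 1|) * (1 + q) ^ (k + 2) := by ring

section CompactlySupported

variable {X : Type*} [TopologicalSpace X] [MeasurableSpace X]
  {μ : Measure X} [IsFiniteMeasure μ] {s : Set X} {f g : X → ℝ}

theorem exists_abs_integral_mul_exp_le_geometric {c r : ℝ} {p : ℕ → X → ℝ} (hs : IsCompact s)
    (hμ : ∀ᵐ x ∂μ, x ∈ s) (hr : r ≠ 0) (hg : Continuous g) (hp : ∀ k, Continuous (p k))
    (hrec : ∀ k x, g x * p (k + 1) x = c * p (k + 1) x + r * (p k x + p (k + 2) x)) (T : ℝ) :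
    ∃ M ρ, 1 ≤ ρ ∧ ∀ k t, |t| ≤ T → |∫ x, p k x * Real.exp (g x * t) ∂μ| ≤ M * ρ ^ k := by
  obtain ⟨B, hB⟩ := hs.exists_bound_of_continuousOn (f := fun x => |p 0 x| + |p 1 x|)
    (by fun_prop)
  obtain ⟨Q, hQ⟩ := hs.exists_bound_of_continuousOn (f := fun x => |g x - c| / |r|)
    (by fun_prop)
  obtain ⟨E, hE⟩ := (hs.prod (isCompact_closedBall (0 : ℝ) T)).exists_bound_of_continuousOn
    (f := fun z : X × ℝ => Real.exp (g z.1 * z.2)) (by fun_prop)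
  refine ⟨B * E * μ.real Set.univ, 1 + |Q|, by simp, fun k t ht => ?_⟩
  have hbound : ∀ᵐ x ∂μ, ‖p k x * Real.exp (g x * t)‖ ≤ B * (1 + |Q|) ^ k * E := by
    filter_upwards [hμ] with x hx
    have hBx : |p 0 x| + |p 1 x| ≤ B := (le_abs_self _).trans (hB x hx)
    have hB0 : 0 ≤ B := (by positivity : 0 ≤ |p 0 x| + |p 1 x|).trans hBx
    have hQx : |g x - c| / |r| ≤ |Q| := (le_abs_self _).trans ((hQ x hx).trans (le_abs_self _))
    have hEx : ‖Real.exp (g x * t)‖ ≤ E := hE (x, t) ⟨hx, by simpa using ht⟩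
    rw [norm_mul]
    refine mul_le_mul ?_ hEx (norm_nonneg _) ?_
    · refine (abs_le_geometric_of_recurrence hr (u := fun k => p k x) (hrec · x) k).trans ?_
      gcongr
    · positivity
  calc |∫ x, p k x * Real.exp (g x * t) ∂μ|
      ≤ B * (1 + |Q|) ^ k * E * μ.real Set.univ := norm_integral_le_of_norm_le_const hbound
    _ = B * E * μ.real Set.univ * (1 + |Q|) ^ k := by ring

variable [OpensMeasurableSpace X]

theorem integrable_of_continuous_of_isCompact (hs : IsCompact s) (hμ : ∀ᵐ x ∂μ, x ∈ s)
    (hf : Continuous f) : Integrable f μ := by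
  obtain ⟨C, hC⟩ := hs.exists_bound_of_continuousOn hf.continuousOn
  exact .of_bound hf.aestronglyMeasurable C (hμ.mono hC)

theorem hasDerivAt_integral_mul_exp (hs : IsCompact s) (hμ : ∀ᵐ x ∂μ, x ∈ s)
    (hf : Continuous f) (hg : Continuous g) (t : ℝ) :
    HasDerivAt (fun t => ∫ x, f x * Real.exp (g x * t) ∂μ)
      (∫ x, f x * g x * Real.exp (g x * t) ∂μ) t := by
  obtain ⟨C, hC⟩ := (hs.prod (isCompact_closedBall t 1)).exists_bound_of_continuousOn
    (f := fun p : X × ℝ => f p.1 * g p.1 * Real.exp (g p.1 * p.2)) (by fun_prop)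
  refine (hasDerivAt_integral_of_dominated_loc_of_deriv_le (bound := fun _ => C)
    (Metric.closedBall_mem_nhds t one_pos)
    (.of_forall fun u => Continuous.aestronglyMeasurable (by fun_prop))
    (integrable_of_continuous_of_isCompact hs hμ (by fun_prop))
    (Continuous.aestronglyMeasurable (by fun_prop))
    (hμ.mono fun x hx u hu => hC (x, u) ⟨hx, hu⟩) (integrable_const C)
    (.of_forall fun x u _ => ?_)).2
  exact (((((hasDerivAt_id u).const_mul (g x)).exp).const_mul (f x))).congr_deriv (by simp; ring)

theorem isJacobiFlow_integral_mul_exp {c r : ℝ} {p : ℕ → X → ℝ} (hs : IsCompact s)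
    (hμ : ∀ᵐ x ∂μ, x ∈ s) (hr : r ≠ 0) (hg : Continuous g) (hp : ∀ k, Continuous (p k))
    (hrec : ∀ k x, g x * p (k + 1) x = c * p (k + 1) x + r * (p k x + p (k + 2) x))
    (hint : ∀ k, ∫ x, p (k + 1) x ∂μ = 0) :
    IsJacobiFlow c r fun k t => ∫ x, p k x * Real.exp (g x * t) ∂μ where
  continuous_zero := continuous_iff_continuousAt.2 fun t =>
    (hasDerivAt_integral_mul_exp hs hμ (hp 0) hg t).continuousAt
  hasDerivAt_succ k t := by
    have hexp (k : ℕ) : Integrable (fun x => p k x * Real.exp (g x * t)) μ :=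
      integrable_of_continuous_of_isCompact hs hμ (by fun_prop)
    refine (hasDerivAt_integral_mul_exp hs hμ (hp (k + 1)) hg t).congr_deriv ?_
    have hhop : Integrable (fun x => r * (p k x * Real.exp (g x * t)
        + p (k + 2) x * Real.exp (g x * t))) μ := ((hexp k).add (hexp (k + 2))).const_mul r
    rw [← integral_add (hexp k) (hexp (k + 2)), ← integral_const_mul, ← integral_const_mul,
      ← integral_add ((hexp (k + 1)).const_mul c) hhop]
    congr with x
    linear_combination Real.exp (g x * t) * hrec k x
  succ_apply_zero k := by simpa using hint k
  exists_abs_le_geometric := exists_abs_integral_mul_exp_le_geometric hs hμ hr hg hp hrec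

end CompactlySupported

/-! ### Integrals against the Chebyshev measure -/

theorem integral_one_sub_sq_mul_U_measureT (n : ℕ) :
    ∫ y, (1 - y ^ 2) * (U ℝ n).eval y ∂measureT = if n = 0 then Real.pi / 2 else 0 := by
  have hpoly (y : ℝ) : (1 - y ^ 2) * (U ℝ n).eval y
      = ((T ℝ n).eval y - (T ℝ (n + 2)).eval y) / 2 := by
    have h := congrArg (Polynomial.eval y) (one_sub_X_sq_mul_U_eq_pol_in_T ℝ (n : ℤ))
    have hT := congrArg (Polynomial.eval y) (T_add_two ℝ (n : ℤ))
    simp only [Polynomial.eval_mul, Polynomial.eval_sub, Polynomial.eval_one, Polynomial.eval_pow,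
      Polynomial.eval_X, Polynomial.eval_ofNat] at h hT
    linear_combination h - hT / 2
  simp only [hpoly]
  rw [integral_div, integral_sub (integrable_measureT (by fun_prop))
    (integrable_measureT (by fun_prop)),
    integral_eval_T_real_measureT_of_ne_zero (n := n + 2) (by lia), sub_zero]
  split_ifs with hn
  · rw [hn, Nat.cast_zero, integral_eval_T_real_measureT_zero]
  · rw [integral_eval_T_real_measureT_of_ne_zero (by exact_mod_cast hn), zero_div]

theorem integral_poissonKernel_measureT {a b : ℝ} (hab : |b| < a) :
    ∫ y, (a ^ 2 - b ^ 2) / (a ^ 2 + b ^ 2 + 2 * a * b * y) ∂measureT = Real.pi := by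
  rw [integral_measureT_eq_integral_cos]
  set P : ℝ → ℝ := fun θ => (a ^ 2 - b ^ 2) / (a ^ 2 + b ^ 2 + 2 * a * b * Real.cos θ) with hP
  have hkernel (θ : ℝ) : poissonKernel 0 (-b) (circleMap 0 a θ) = P θ := by
    simp only [poissonKernel, ← Complex.normSq_eq_norm_sq, Complex.normSq_apply, circleMap,
      sub_zero, zero_add, Complex.sub_re, Complex.sub_im, Complex.neg_re, Complex.neg_im,
      Complex.re_ofReal_mul, Complex.im_ofReal_mul, Complex.ofReal_re, Complex.ofReal_im,
      Complex.exp_ofReal_mul_I_re, Complex.exp_ofReal_mul_I_im, hP]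
    congr 1 <;> linear_combination a ^ 2 * Real.sin_sq_add_cos_sq θ
  have haverage : Real.circleAverage (poissonKernel 0 (-b)) 0 a = 1 := by
    have hconst := InnerProductSpace.harmonicContOnCl_const (c := (1 : ℝ))
      (s := Metric.ball (0 : ℂ) a)
    have h := hconst.circleAverage_poissonKernel_smul (w := -b) (by simpa)
    rwa [smul_eq_mul, ← Pi.one_def, mul_one] at h
  have hperiod : ∫ θ in (0 : ℝ)..2 * Real.pi, P θ = 2 * Real.pi := by
    simp only [Real.circleAverage_def, hkernel, smul_eq_mul] at haverage
    field_simp at haverage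
    exact haverage
  have hint : IntervalIntegrable P volume 0 (2 * Real.pi) :=
    intervalIntegral.intervalIntegrable_of_integral_ne_zero (hperiod.trans_ne (by positivity))
  have hreflect : ∫ θ in Real.pi..2 * Real.pi, P θ = ∫ θ in (0 : ℝ)..Real.pi, P θ := by
    have h := intervalIntegral.integral_comp_sub_left (a := 0) (b := Real.pi) P (2 * Real.pi)
    simp only [hP, Real.cos_two_pi_sub, sub_zero] at h
    rw [h, two_mul, add_sub_cancel_right]
  have hmem : Real.pi ∈ Set.uIcc 0 (2 * Real.pi) :=
    Set.Icc_subset_uIcc ⟨Real.pi_pos.le, by linarith [Real.pi_pos]⟩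
  have hsplit := intervalIntegral.integral_add_adjacent_intervals
    (hint.mono_set (Set.uIcc_subset_uIcc_left hmem))
    (hint.mono_set (Set.uIcc_subset_uIcc_right hmem))
  linarith

theorem integral_one_sub_sq_sq_div_measureT (r : ℝ) :
    ∫ y, (1 - r ^ 2) ^ 2 / (1 + r ^ 2 + 2 * r * y) ∂measureT = Real.pi * |1 - r ^ 2| := by
  rcases lt_trichotomy (r ^ 2) 1 with hr | hr | hr
  · have h := integral_poissonKernel_measureT (sq_lt_one_iff_abs_lt_one r |>.1 hr)
    rw [abs_of_pos (sub_pos.2 hr), ← h, ← integral_mul_const]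
    congr with y
    ring
  · simp [hr]
  · have hr₁ : 1 < |r| := one_lt_sq_iff_one_lt_abs r |>.1 hr
    have hr₀ : |r| ≠ 0 := by positivity
    have h := integral_poissonKernel_measureT (a := |r|) (b := r / |r|)
      (by rwa [abs_div, abs_abs, div_self hr₀])
    rw [div_pow, sq_abs, div_self (by positivity), mul_assoc, mul_div_cancel₀ _ hr₀] at h
    rw [abs_of_neg (sub_neg.2 hr), ← h, ← integral_mul_const]
    congr with y
    ring

theorem integral_measureT_congr {f g : ℝ → ℝ} (h : (Set.Ioo (-1) 1).EqOn f g) :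
    ∫ y, f y ∂measureT = ∫ y, g y ∂measureT := by
  rw [integral_measureT, integral_measureT]
  exact intervalIntegral.integral_congr_Ioo_of_le (by norm_num) fun y hy => by rw [h hy]

theorem one_add_sq_add_two_mul_pos {y : ℝ} (hy : y ∈ Set.Ioo (-1) 1) (r : ℝ) :
    0 < 1 + r ^ 2 + 2 * r * y := by
  nlinarith [hy.1, hy.2, sq_nonneg (r + y)]

theorem sq_mul_integral_one_sub_sq_div_measureT (r : ℝ) :
    r ^ 2 * ∫ y, (1 - y ^ 2) / (1 + r ^ 2 + 2 * r * y) ∂measureT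
      = Real.pi / 2 * min 1 (r ^ 2) := by
  have hdiv : 4 * r ^ 2 * ∫ y, (1 - y ^ 2) / (1 + r ^ 2 + 2 * r * y) ∂measureT
      = ∫ y, ((1 + r ^ 2 - 2 * r * y) - (1 - r ^ 2) ^ 2 / (1 + r ^ 2 + 2 * r * y)) ∂measureT := by
    rw [← integral_const_mul]
    refine integral_measureT_congr fun y hy => ?_
    rw [eq_sub_iff_add_eq, ← mul_div_assoc, ← add_div,
      div_eq_iff (one_add_sq_add_two_mul_pos hy r).ne']
    ring
  have hpoly : ∫ y, (1 + r ^ 2 - 2 * r * y) ∂measureT = Real.pi * (1 + r ^ 2) := by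
    rw [integral_measureT_eq_integral_cos]
    simp [mul_comm, mul_add]
  have hint : Integrable (fun y => (1 - r ^ 2) ^ 2 / (1 + r ^ 2 + 2 * r * y)) measureT := by
    rcases eq_or_ne (r ^ 2) 1 with hr | hr
    · simp [hr]
    · refine .of_integral_ne_zero ?_
      rw [integral_one_sub_sq_sq_div_measureT]
      exact mul_ne_zero Real.pi_ne_zero (abs_ne_zero.2 (sub_ne_zero.2 hr.symm))
  rw [integral_sub (integrable_measureT (by fun_prop)) hint, hpoly,
    integral_one_sub_sq_sq_div_measureT] at hdiv
  linear_combination hdiv / 4 + Real.pi / 4 * max_sub_min_eq_abs' 1 (r ^ 2)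
    - Real.pi / 4 * min_add_max 1 (r ^ 2)

/-! ### The Marchenko–Pastur law -/

/-- The absolutely continuous part of the Marchenko–Pastur law. -/
noncomputable def mpBulk (δ : ℝ) : Measure ℝ :=
  volume.withDensity
    (fun x => ENNReal.ofReal ((Set.Icc (lamMinus δ) (lamPlus δ)).indicator (mpDensity δ) x))

theorem mpMeasure_eq (δ : ℝ) :
    mpMeasure δ = mpBulk δ + ENNReal.ofReal (1 - δ) • Measure.dirac 0 := rfl

theorem lamMinus_nonneg (δ : ℝ) : 0 ≤ lamMinus δ := sq_nonneg _

theorem lamMinus_le_lamPlus (δ : ℝ) : lamMinus δ ≤ lamPlus δ := by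
  have : 0 ≤ 1 / √δ := by positivity
  simp only [lamMinus, lamPlus]
  nlinarith

theorem mpDensity_nonneg {δ x : ℝ} (hδ : 0 ≤ δ) (hx : 0 ≤ x) : 0 ≤ mpDensity δ x := by
  unfold mpDensity
  positivity

theorem measurable_indicator_mpDensity (δ : ℝ) : Measurable fun x =>
    ENNReal.ofReal ((Set.Icc (lamMinus δ) (lamPlus δ)).indicator (mpDensity δ) x) := by
  refine (Measurable.indicator ?_ measurableSet_Icc).ennreal_ofReal
  unfold mpDensity
  fun_prop

theorem ae_mem_Icc_mpMeasure (δ : ℝ) : ∀ᵐ x ∂mpMeasure δ, x ∈ Set.Icc 0 (lamPlus δ) := by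
  rw [mpMeasure_eq, ae_add_measure_iff]
  constructor
  · rw [mpBulk, ae_withDensity_iff (measurable_indicator_mpDensity δ)]
    refine .of_forall fun x hx => ?_
    have hmem : x ∈ Set.Icc (lamMinus δ) (lamPlus δ) :=
      Set.mem_of_indicator_ne_zero fun h => hx (by rw [h, ENNReal.ofReal_zero])
    exact Set.Icc_subset_Icc_left (lamMinus_nonneg δ) hmem
  · refine Measure.ae_smul_measure ?_ _
    exact (ae_dirac_iff measurableSet_Icc).2 ⟨le_rfl, sq_nonneg _⟩

theorem mul_one_div_sqrt_sq {δ : ℝ} (hδ : 0 < δ) : δ * (1 / √δ) ^ 2 = 1 := by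
  rw [div_pow, Real.sq_sqrt hδ.le]
  field_simp

theorem mpDensity_affine {δ : ℝ} (hδ : 0 < δ) (y : ℝ) :
    2 * (1 / √δ) * mpDensity δ (1 + (1 / √δ) ^ 2 + 2 * (1 / √δ) * y)
      = 2 / Real.pi * ((1 - y ^ 2) / (1 + (1 / √δ) ^ 2 + 2 * (1 / √δ) * y))
        * √((1 - y ^ 2)⁻¹) := by
  have hδr := mul_one_div_sqrt_sq hδ
  simp only [mpDensity, lamMinus, lamPlus]
  set r := 1 / √δ
  have hr₀ : 0 ≤ r := by positivity
  have hedges : ((1 + r) ^ 2 - (1 + r ^ 2 + 2 * r * y)) * (1 + r ^ 2 + 2 * r * y - (1 - r) ^ 2)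
      = (2 * r) ^ 2 * (1 - y ^ 2) := by ring
  rw [hedges, Real.sqrt_mul (sq_nonneg _), Real.sqrt_sq (mul_nonneg zero_le_two hr₀), Real.sqrt_inv]
  generalize 1 + r ^ 2 + 2 * r * y = x
  calc 2 * r * (δ * (2 * r * √(1 - y ^ 2)) / (2 * Real.pi * x))
      = δ * r ^ 2 * (2 / Real.pi * (√(1 - y ^ 2) / x)) := by ring
    _ = 2 / Real.pi * ((1 - y ^ 2) / √(1 - y ^ 2) / x) := by rw [hδr, one_mul, Real.div_sqrt]
    _ = 2 / Real.pi * ((1 - y ^ 2) / x) * (√(1 - y ^ 2))⁻¹ := by ring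

theorem integral_mpBulk_eq_intervalIntegral {δ : ℝ} (hδ : 0 ≤ δ) (g : ℝ → ℝ) :
    ∫ x, g x ∂mpBulk δ = ∫ x in lamMinus δ..lamPlus δ, mpDensity δ x * g x := by
  rw [mpBulk, integral_withDensity_eq_integral_toReal_smul (measurable_indicator_mpDensity δ)
    (.of_forall fun _ => ENNReal.ofReal_lt_top), intervalIntegral.integral_of_le
    (lamMinus_le_lamPlus δ), ← integral_Icc_eq_integral_Ioc, ← integral_indicator measurableSet_Icc]
  congr with x
  by_cases hx : x ∈ Set.Icc (lamMinus δ) (lamPlus δ)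
  · have hdensity := mpDensity_nonneg hδ ((lamMinus_nonneg δ).trans hx.1)
    simp [hx, hdensity]
  · simp [hx]

theorem integral_mpBulk {δ : ℝ} (hδ : 0 < δ) (g : ℝ → ℝ) :
    ∫ x, g x ∂mpBulk δ = 2 / Real.pi * ∫ y, (1 - y ^ 2) / (1 + (1 / √δ) ^ 2 + 2 * (1 / √δ) * y)
      * g (1 + (1 / √δ) ^ 2 + 2 * (1 / √δ) * y) ∂measureT := by
  have haffine := intervalIntegral.mul_integral_comp_add_mul (a := -1) (b := 1)
    (f := fun x => mpDensity δ x * g x) (2 * (1 / √δ)) (1 + (1 / √δ) ^ 2)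
  have hminus : 1 + (1 / √δ) ^ 2 + 2 * (1 / √δ) * -1 = lamMinus δ := by rw [lamMinus]; ring
  have hplus : 1 + (1 / √δ) ^ 2 + 2 * (1 / √δ) * 1 = lamPlus δ := by rw [lamPlus]; ring
  rw [hminus, hplus] at haffine
  rw [integral_mpBulk_eq_intervalIntegral hδ.le, ← haffine, integral_measureT,
    ← intervalIntegral.integral_const_mul, ← intervalIntegral.integral_const_mul]
  congr with y
  rw [← mul_assoc, mpDensity_affine hδ]
  ring_nf

theorem measureReal_mpBulk {δ : ℝ} (hδ : 0 < δ) : (mpBulk δ).real Set.univ = min 1 δ := by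
  have hδr := mul_one_div_sqrt_sq hδ
  have hmass := integral_mpBulk hδ fun _ => 1
  simp only [mul_one, integral_const, smul_eq_mul] at hmass
  have hI := sq_mul_integral_one_sub_sq_div_measureT (1 / √δ)
  set I := ∫ y, (1 - y ^ 2) / (1 + (1 / √δ) ^ 2 + 2 * (1 / √δ) * y) ∂measureT
  calc (mpBulk δ).real Set.univ = 2 / Real.pi * I * (δ * (1 / √δ) ^ 2) := by
        rw [hmass, hδr, mul_one]
    _ = 2 / Real.pi * δ * ((1 / √δ) ^ 2 * I) := by ring
    _ = δ * min 1 ((1 / √δ) ^ 2) := by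
        rw [hI]
        field_simp
    _ = min 1 δ := by rw [mul_min_of_nonneg _ _ hδ.le, mul_one, hδr, min_comm]

theorem isFiniteMeasure_mpBulk {δ : ℝ} (hδ : 0 < δ) : IsFiniteMeasure (mpBulk δ) := by
  refine ⟨lt_top_iff_ne_top.2 fun htop => ?_⟩
  have hmass : min 1 δ = 0 := by
    rw [← measureReal_mpBulk hδ, Measure.real, htop, ENNReal.toReal_top]
  exact (lt_min one_pos hδ).ne' hmass

theorem isProbabilityMeasure_mpMeasure {δ : ℝ} (hδ : 0 < δ) :
    IsProbabilityMeasure (mpMeasure δ) := by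
  have := isFiniteMeasure_mpBulk hδ
  refine ⟨?_⟩
  have hmass : mpBulk δ Set.univ = ENNReal.ofReal (min 1 δ) := by
    rw [← measureReal_mpBulk hδ, ofReal_measureReal]
  rw [mpMeasure_eq, Measure.add_apply, hmass, Measure.smul_apply, measure_univ, smul_eq_mul,
    mul_one]
  rcases le_total δ 1 with hδ₁ | hδ₁
  · rw [min_eq_right hδ₁, ← ENNReal.ofReal_add hδ.le (sub_nonneg.2 hδ₁), add_sub_cancel,
      ENNReal.ofReal_one]
  · rw [min_eq_left hδ₁, ENNReal.ofReal_of_nonpos (sub_nonpos.2 hδ₁), ENNReal.ofReal_one, add_zero]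

theorem integrable_mpMeasure {δ : ℝ} (hδ : 0 < δ) {g : ℝ → ℝ} (hg : Continuous g) :
    Integrable g (mpMeasure δ) :=
  have := isProbabilityMeasure_mpMeasure hδ
  integrable_of_continuous_of_isCompact isCompact_Icc (ae_mem_Icc_mpMeasure δ) hg

theorem integral_mpMeasure_of_apply_zero {δ : ℝ} (hδ : 0 < δ) {g : ℝ → ℝ} (hg : Continuous g)
    (hg₀ : g 0 = 0) : ∫ x, g x ∂mpMeasure δ = ∫ x, g x ∂mpBulk δ := by
  have hint := integrable_mpMeasure hδ hg
  rw [mpMeasure_eq] at hint ⊢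
  rw [integral_add_measure hint.left_of_add_measure hint.right_of_add_measure,
    integral_smul_measure, integral_dirac, hg₀, smul_zero, add_zero]

section OrthogonalPolynomials

/-- The Chebyshev polynomial `Uₙ` transported from `[-1, 1]` to `[(1 - r)², (1 + r)²]`. At
`r = 1 / √δ` these are the orthogonal polynomials of the semicircle law `x μ_MP(dx)`. -/
noncomputable def shiftedU (r : ℝ) (n : ℤ) (x : ℝ) : ℝ := (U ℝ n).eval ((x - (1 + r ^ 2)) / (2 * r))

/-- The orthogonal polynomials of the Marchenko–Pastur law with parameter `δ`, at `r = 1 / √δ`. -/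
noncomputable def mpPoly (r : ℝ) (n : ℤ) (x : ℝ) : ℝ := shiftedU r n x + r * shiftedU r (n - 1) x

variable {r : ℝ}

theorem continuous_shiftedU (r : ℝ) (n : ℤ) : Continuous (shiftedU r n) := by
  unfold shiftedU
  fun_prop

theorem continuous_mpPoly (r : ℝ) (n : ℤ) : Continuous (mpPoly r n) :=
  (continuous_shiftedU r n).add ((continuous_shiftedU r (n - 1)).const_mul r)

theorem shiftedU_zero (r x : ℝ) : shiftedU r 0 x = 1 := by simp [shiftedU]

theorem shiftedU_neg_one (r x : ℝ) : shiftedU r (-1) x = 0 := by simp [shiftedU]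

theorem mul_shiftedU (hr : r ≠ 0) (n : ℤ) (x : ℝ) :
    x * shiftedU r n x
      = (1 + r ^ 2) * shiftedU r n x + r * (shiftedU r (n - 1) x + shiftedU r (n + 1) x) := by
  have h := congrArg (Polynomial.eval ((x - (1 + r ^ 2)) / (2 * r))) (U_add_one ℝ n)
  simp only [Polynomial.eval_mul, Polynomial.eval_sub, Polynomial.eval_ofNat,
    Polynomial.eval_X] at h
  simp only [shiftedU, h]
  field_simp
  ring

theorem mpPoly_zero (r x : ℝ) : mpPoly r 0 x = 1 := by
  simp [mpPoly, shiftedU_zero, shiftedU_neg_one]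

theorem mul_mpPoly (hr : r ≠ 0) (n : ℤ) (x : ℝ) :
    x * mpPoly r n x
      = (1 + r ^ 2) * mpPoly r n x + r * (mpPoly r (n - 1) x + mpPoly r (n + 1) x) := by
  have h₀ := mul_shiftedU hr n x
  have h₁ := mul_shiftedU hr (n - 1) x
  rw [sub_add_cancel] at h₁
  simp only [mpPoly, add_sub_cancel_right]
  linear_combination h₀ + r * h₁

theorem mul_shiftedU_eq_mpPoly (hr : r ≠ 0) (n : ℤ) (x : ℝ) :
    x * shiftedU r n x = mpPoly r n x + r * mpPoly r (n + 1) x := by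
  simp only [mpPoly, add_sub_cancel_right]
  linear_combination mul_shiftedU hr n x

end OrthogonalPolynomials

section MarchenkoPastur

variable {δ : ℝ}

theorem integral_mul_shiftedU_mpMeasure (hδ : 0 < δ) (n : ℕ) :
    ∫ x, x * shiftedU (1 / √δ) n x ∂mpMeasure δ = if n = 0 then 1 else 0 := by
  have hr : 1 / √δ ≠ 0 := by positivity
  have hcont := continuous_shiftedU (1 / √δ) n
  rw [integral_mpMeasure_of_apply_zero (g := fun x => x * shiftedU (1 / √δ) n x) hδ
    (by fun_prop) (zero_mul _), integral_mpBulk hδ]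
  calc _ = 2 / Real.pi * ∫ y, (1 - y ^ 2) * (U ℝ n).eval y ∂measureT := by
        congr 1
        refine integral_measureT_congr fun y hy => ?_
        have hx := (one_add_sq_add_two_mul_pos hy (1 / √δ)).ne'
        rw [← mul_assoc, div_mul_cancel₀ _ hx, shiftedU, add_sub_cancel_left,
          mul_div_cancel_left₀ _ (mul_ne_zero two_ne_zero hr)]
    _ = if n = 0 then 1 else 0 := by
        rw [integral_one_sub_sq_mul_U_measureT]
        split_ifs
        · field_simp
        · rw [mul_zero]

theorem integral_mpPoly_add_one_mpMeasure (hδ : 0 < δ) (n : ℕ) :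
    ∫ x, mpPoly (1 / √δ) (n + 1) x ∂mpMeasure δ = 0 := by
  have hr : 1 / √δ ≠ 0 := by positivity
  have hstep (n : ℕ) : ∫ x, mpPoly (1 / √δ) n x ∂mpMeasure δ
      + 1 / √δ * ∫ x, mpPoly (1 / √δ) (n + 1) x ∂mpMeasure δ = if n = 0 then 1 else 0 := by
    rw [← integral_mul_shiftedU_mpMeasure hδ, ← integral_const_mul, ← integral_add
      (integrable_mpMeasure hδ (continuous_mpPoly _ _))
      ((integrable_mpMeasure hδ (continuous_mpPoly _ _)).const_mul _)]
    simp only [mul_shiftedU_eq_mpPoly hr]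
  induction n with
  | zero =>
    have := isProbabilityMeasure_mpMeasure hδ
    simpa [mpPoly_zero, hδ.ne', (Real.sqrt_pos.2 hδ).ne'] using hstep 0
  | succ n ih =>
    have h := hstep (n + 1)
    rw [if_neg n.succ_ne_zero] at h
    push_cast at h ⊢
    rw [ih, zero_add] at h
    exact (mul_eq_zero.1 h).resolve_left hr

theorem isJacobiFlow_mpMeasure (hδ : 0 < δ) (lam : ℝ) {p : ℕ → ℝ → ℝ} (hp : ∀ k, Continuous (p k))
    (hrec : ∀ k x, x * p (k + 1) x
      = (1 + (1 / √δ) ^ 2) * p (k + 1) x + 1 / √δ * (p k x + p (k + 2) x))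
    (hint : ∀ k, ∫ x, p (k + 1) x ∂mpMeasure δ = 0) :
    IsJacobiFlow (-(1 + (1 / √δ) ^ 2 + lam)) (-(1 / √δ))
      fun k t => ∫ x, p k x * Real.exp (-(x + lam) * t) ∂mpMeasure δ :=
  have := isProbabilityMeasure_mpMeasure hδ
  isJacobiFlow_integral_mul_exp isCompact_Icc (ae_mem_Icc_mpMeasure δ)
    (neg_ne_zero.2 (by positivity)) (by fun_prop) hp
    (fun k x => by linear_combination -hrec k x) hint

theorem isJacobiFlow_mpPoly (hδ : 0 < δ) (lam : ℝ) :
    IsJacobiFlow (-(1 + (1 / √δ) ^ 2 + lam)) (-(1 / √δ))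
      fun k t => ∫ x, mpPoly (1 / √δ) k x * Real.exp (-(x + lam) * t) ∂mpMeasure δ := by
  refine isJacobiFlow_mpMeasure hδ lam (fun k => continuous_mpPoly _ k) (fun k x => ?_)
    fun k => by exact_mod_cast integral_mpPoly_add_one_mpMeasure hδ k
  have h := mul_mpPoly (r := 1 / √δ) (by positivity) (k + 1) x
  rw [add_sub_cancel_right, add_assoc, one_add_one_eq_two] at h
  exact_mod_cast h

theorem isJacobiFlow_mul_shiftedU (hδ : 0 < δ) (lam : ℝ) :
    IsJacobiFlow (-(1 + (1 / √δ) ^ 2 + lam)) (-(1 / √δ))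
      fun k t => ∫ x, x * shiftedU (1 / √δ) k x * Real.exp (-(x + lam) * t) ∂mpMeasure δ := by
  refine isJacobiFlow_mpMeasure hδ lam (fun k => continuous_id.mul (continuous_shiftedU _ k))
    (fun k x => ?_) fun k => by simpa using integral_mul_shiftedU_mpMeasure hδ (k + 1)
  have h := mul_shiftedU (r := 1 / √δ) (by positivity) (k + 1) x
  rw [add_sub_cancel_right, add_assoc, one_add_one_eq_two] at h
  push_cast
  linear_combination x * h

theorem hasDerivAt_integral_mul_exp_mpMeasure (hδ : 0 < δ) (lam : ℝ) {f : ℝ → ℝ} (hf : Continuous f)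
    (t : ℝ) : HasDerivAt (fun t => ∫ x, f x * Real.exp (-(x + lam) * t) ∂mpMeasure δ)
      (∫ x, f x * -(x + lam) * Real.exp (-(x + lam) * t) ∂mpMeasure δ) t :=
  have := isProbabilityMeasure_mpMeasure hδ
  hasDerivAt_integral_mul_exp isCompact_Icc (ae_mem_Icc_mpMeasure δ) hf (by fun_prop) t

theorem K0_zero (hδ : 0 < δ) (lam : ℝ) : K0 δ lam 0 = 1 := by
  have := isProbabilityMeasure_mpMeasure hδ
  simp [K0]

theorem K1_zero (hδ : 0 < δ) (lam : ℝ) : K1 δ lam 0 = 1 := by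
  simpa [K1, shiftedU_zero] using integral_mul_shiftedU_mpMeasure hδ 0

theorem hasDerivAt_K0 (hδ : 0 < δ) (lam t : ℝ) :
    HasDerivAt (K0 δ lam) (-lam * K0 δ lam t - K1 δ lam t) t := by
  have h := hasDerivAt_integral_mul_exp_mpMeasure hδ lam (continuous_const (y := (1 : ℝ))) t
  simp only [one_mul] at h
  refine h.congr_deriv ?_
  rw [K0, K1, ← integral_const_mul, ← integral_sub (integrable_mpMeasure hδ (by fun_prop))
    (integrable_mpMeasure hδ (by fun_prop))]
  congr with x
  ring

theorem hasDerivAt_K1 (hδ : 0 < δ) (lam t : ℝ) :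
    HasDerivAt (K1 δ lam) (-(1 + (1 / √δ) ^ 2 + lam) * K1 δ lam t + -(1 / √δ)
      * ∫ x, x * shiftedU (1 / √δ) 1 x * Real.exp (-(x + lam) * t) ∂mpMeasure δ) t := by
  have hcont := continuous_shiftedU (1 / √δ) 1
  refine (hasDerivAt_integral_mul_exp_mpMeasure hδ lam continuous_id t).congr_deriv ?_
  rw [K1, ← integral_const_mul, ← integral_const_mul, ← integral_add
    (integrable_mpMeasure hδ (by fun_prop)) (integrable_mpMeasure hδ (by fun_prop))]
  congr with x
  have h := mul_shiftedU (r := 1 / √δ) (by positivity) 0 x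
  rw [shiftedU_zero, zero_sub, shiftedU_neg_one, zero_add, zero_add] at h
  simp only [id]
  linear_combination -(x * Real.exp (-(x + lam) * t)) * h

theorem K1_eq_K0_add (hδ : 0 < δ) (lam t : ℝ) : K1 δ lam t = K0 δ lam t
    + 1 / √δ * ∫ x, mpPoly (1 / √δ) 1 x * Real.exp (-(x + lam) * t) ∂mpMeasure δ := by
  have hcont := continuous_mpPoly (1 / √δ) 1
  rw [K1, K0, ← integral_const_mul, ← integral_add (integrable_mpMeasure hδ (by fun_prop))
    (integrable_mpMeasure hδ (by fun_prop))]
  congr with x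
  have h := mul_shiftedU_eq_mpPoly (r := 1 / √δ) (by positivity) 0 x
  rw [shiftedU_zero, mpPoly_zero, zero_add] at h
  linear_combination Real.exp (-(x + lam) * t) * h

theorem K1_eq_K0_sub_causalConv (hδ : 0 < δ) (lam t : ℝ) :
    K1 δ lam t = K0 δ lam t - 1 / δ * causalConv (K0 δ lam) (K1 δ lam) t := by
  have hr : (1 / √δ) ^ 2 = 1 / δ := eq_one_div_of_mul_eq_one_right (mul_one_div_sqrt_sq hδ)
  have hK₀ (t : ℝ) : ∫ x, mpPoly (1 / √δ) (0 : ℕ) x * Real.exp (-(x + lam) * t) ∂mpMeasure δ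
      = K0 δ lam t := by
    simp only [Nat.cast_zero, mpPoly_zero, one_mul, K0]
  have hK₁ (t : ℝ) : ∫ x, x * shiftedU (1 / √δ) (0 : ℕ) x * Real.exp (-(x + lam) * t) ∂mpMeasure δ
      = K1 δ lam t := by
    simp only [Nat.cast_zero, shiftedU_zero, mul_one, K1]
  have h := (isJacobiFlow_mpPoly hδ lam).mul_causalConv_zero_zero
    (isJacobiFlow_mul_shiftedU hδ lam)
    (fun t => by simpa only [hK₁, Nat.cast_one] using hasDerivAt_K1 hδ lam t) t
  simp only [hK₀, hK₁, K1_zero hδ, one_mul, Nat.cast_one] at h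
  rw [K1_eq_K0_add hδ, ← h, ← hr]
  ring

theorem continuous_K0 (hδ : 0 < δ) (lam : ℝ) : Continuous (K0 δ lam) :=
  continuous_iff_continuousAt.2 fun t => (hasDerivAt_K0 hδ lam t).continuousAt

theorem continuous_K1 (hδ : 0 < δ) (lam : ℝ) : Continuous (K1 δ lam) :=
  continuous_iff_continuousAt.2 fun t => (hasDerivAt_K1 hδ lam t).continuousAt

theorem K0_eq_one_sub_integral (hδ : 0 < δ) (lam t : ℝ) :
    K0 δ lam t = 1 - ∫ s in (0 : ℝ)..t, (lam * K0 δ lam s + K1 δ lam s) := by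
  have hK₀ := continuous_K0 hδ lam
  have hK₁ := continuous_K1 hδ lam
  have hderiv (s : ℝ) : HasDerivAt (-K0 δ lam) (lam * K0 δ lam s + K1 δ lam s) s :=
    (hasDerivAt_K0 hδ lam s).neg.congr_deriv (by ring)
  rw [intervalIntegral.integral_eq_sub_of_hasDerivAt (fun s _ => hderiv s)
    (Continuous.intervalIntegrable (by fun_prop) 0 t), Pi.neg_apply, Pi.neg_apply, K0_zero hδ]
  ring

end MarchenkoPastur

theorem mp_solves_dmft_volterra_general (δ lam : ℝ) (hδ : 0 < δ) (t : ℝ) :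
    (K0 δ lam t
        = 1 - ∫ s in (0:ℝ)..t, ((1 + lam) * K0 δ lam s
            + ∫ u in (0:ℝ)..s, (-(1 / δ) * K1 δ lam (s - u)) * K0 δ lam u)) ∧
    (-(1 / δ) * K1 δ lam t
        = -(1 / δ) * K0 δ lam t
          - (1 / δ) * ∫ s in (0:ℝ)..t, K0 δ lam (t - s) * (-(1 / δ) * K1 δ lam s)) := by
  constructor
  · have hdrift (s : ℝ) : (1 + lam) * K0 δ lam s
        + causalConv (-(1 / δ) • K1 δ lam) (K0 δ lam) s = lam * K0 δ lam s + K1 δ lam s := by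
      rw [causalConv_smul_left, causalConv_comm]
      linear_combination -K1_eq_K0_sub_causalConv hδ lam s
    exact (K0_eq_one_sub_integral hδ lam t).trans (by simp only [← hdrift]; rfl)
  · change _ = _ - 1 / δ * causalConv (K0 δ lam) (-(1 / δ) • K1 δ lam) t
    rw [causalConv_smul_right]
    linear_combination -(1 / δ) * K1_eq_K0_sub_causalConv hδ lam t

/-- The pair `(R_θ, R_ℓ) = (K₀, −(1/δ) K₁)` solves the coupled Volterra integral
equations for the DMFT response functions of ridge regression:
`R_θ(t) = 1 − ∫₀ᵗ ((1+λ) R_θ(s) + ∫₀ˢ R_ℓ(s−u) R_θ(u) du) ds` and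
`R_ℓ(t) = −(1/δ) R_θ(t) − (1/δ) ∫₀ᵗ R_θ(t−s) R_ℓ(s) ds`. -/
theorem mp_solves_dmft_volterra (δ lam : ℝ) (hδ : 0 < δ) (hlam : 0 ≤ lam) :
    ∀ t : ℝ, 0 ≤ t →
      (K0 δ lam t
          = 1 - ∫ s in (0:ℝ)..t, ((1 + lam) * K0 δ lam s
              + ∫ u in (0:ℝ)..s, (-(1 / δ) * K1 δ lam (s - u)) * K0 δ lam u)) ∧
      (-(1 / δ) * K1 δ lam t
          = -(1 / δ) * K0 δ lam t
            - (1 / δ) * ∫ s in (0:ℝ)..t, K0 δ lam (t - s) * (-(1 / δ) * K1 δ lam s)) :=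
  fun t _ => mp_solves_dmft_volterra_general δ lam hδ t
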